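/- The commutator subgroup of H_{2,2} equals {I, -I}. -/

import Mathlib

noncomputable section

open Complex Matrix

def S1 : Matrix (Fin 4) (Fin 4) ℂ := !![0,0,1,0; 0,0,0,1; 1,0,0,0; 0,1,0,0]
def S2 : Matrix (Fin 4) (Fin 4) ℂ := !![0,1,0,0; 1,0,0,0; 0,0,0,1; 0,0,1,0]
def T1 : Matrix (Fin 4) (Fin 4) ℂ := !![1,0,0,0; 0,1,0,0; 0,0,-1,0; 0,0,0,-1]
def T2 : Matrix (Fin 4) (Fin 4) ℂ := !![1,0,0,0; 0,-1,0,0; 0,0,1,0; 0,0,0,-1]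

/-- The Heisenberg group `H_{2,2}`: the subgroup of invertible 4×4 complex matrices
generated by `S1`, `S2`, `T1`, `T2` (all of which have determinant 1). -/
def H22 : Subgroup (Matrix (Fin 4) (Fin 4) ℂ)ˣ :=
  Subgroup.closure {u : (Matrix (Fin 4) (Fin 4) ℂ)ˣ |
    (u : Matrix (Fin 4) (Fin 4) ℂ) = S1 ∨ (u : Matrix (Fin 4) (Fin 4) ℂ) = S2 ∨
    (u : Matrix (Fin 4) (Fin 4) ℂ) = T1 ∨ (u : Matrix (Fin 4) (Fin 4) ℂ) = T2}

abbrev MU := (Matrix (Fin 4) (Fin 4) ℂ)ˣ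

def RC (a b : MU) : Prop := a * b = b * a ∨ a * b = -(b * a)

theorem RC.symm {a b : MU} (h : RC a b) : RC b a := by
  rcases h with h | h
  · exact Or.inl h.symm
  · exact Or.inr (by rw [h, neg_neg])

theorem RC.mul {a b c : MU} (h : RC a c) (h' : RC b c) : RC (a * b) c := by
  unfold RC at *
  rcases h with h | h <;> rcases h' with h' | h' <;>
    simp [mul_assoc, h', ← mul_assoc a c, h]

theorem RC.inv {a c : MU} (h : RC a c) : RC a⁻¹ c := by
  unfold RC at *
  rcases h with h | h
  · left
    rw [inv_mul_eq_iff_eq_mul, ← mul_assoc, h, mul_inv_cancel_right]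
  · right
    rw [inv_mul_eq_iff_eq_mul, mul_neg, ← mul_assoc, h, neg_mul, neg_neg, mul_inv_cancel_right]

theorem RC.one (c : MU) : RC 1 c := Or.inl (by simp)

theorem RC.closure {s : Set MU} {c : MU} (h : ∀ a ∈ s, RC a c) :
    ∀ a ∈ Subgroup.closure s, RC a c := by
  intro a ha
  induction ha using Subgroup.closure_induction with
  | mem x hx => exact h x hx
  | one => exact RC.one c
  | mul x y _ _ hx hy => exact hx.mul hy
  | inv x _ hx => exact hx.inv

theorem RC.of_val {a b : MU} (h : (a : Matrix (Fin 4) (Fin 4) ℂ) * b = b * a ∨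
    (a : Matrix (Fin 4) (Fin 4) ℂ) * b = -(b * a)) : RC a b := by
  rcases h with h | h
  · exact Or.inl (Units.ext (by simpa using h))
  · exact Or.inr (Units.ext (by simpa using h))

theorem S1T1 : S1 * T1 = -(T1 * S1) := by simp [S1, T1]
theorem S1S2 : S1 * S2 = S2 * S1 := by simp [S1, S2]
theorem S1T2 : S1 * T2 = T2 * S1 := by simp [S1, T2]
theorem S2T1 : S2 * T1 = T1 * S2 := by simp [S2, T1]
theorem S2T2 : S2 * T2 = -(T2 * S2) := by simp [S2, T2]
theorem T1T2 : T1 * T2 = T2 * T1 := by simp [T1, T2]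
theorem S1S1 : S1 * S1 = 1 := by
  ext i j; fin_cases i <;> fin_cases j <;> simp [S1, Matrix.mul_apply, Fin.sum_univ_four]
theorem T1T1 : T1 * T1 = 1 := by
  ext i j; fin_cases i <;> fin_cases j <;> simp [T1, Matrix.mul_apply, Fin.sum_univ_four]

theorem RC_H22 {a b : MU} (ha : a ∈ H22) (hb : b ∈ H22) : RC a b := by
  refine RC.closure (fun x hx => ?_) a ha
  refine RC.symm (RC.closure (fun y hy => ?_) b hb)
  apply RC.of_val
  rcases hx with hx | hx | hx | hx <;> rcases hy with hy | hy | hy | hy <;>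
    rw [hx, hy] <;> simp [S1T1, S1S2, S1T2, S2T1, S2T2, T1T2]

def uS1 : MU := ⟨S1, S1, S1S1, S1S1⟩
def uT1 : MU := ⟨T1, T1, T1T1, T1T1⟩

/-- The commutator subgroup of the Heisenberg group `H_{2,2}`
equals `{I, -I}`. -/
theorem heisenberg_commutator :
    ∀ u : (Matrix (Fin 4) (Fin 4) ℂ)ˣ,
      u ∈ ⁅H22, H22⁆ ↔
        (u : Matrix (Fin 4) (Fin 4) ℂ) = 1 ∨ (u : Matrix (Fin 4) (Fin 4) ℂ) = -1 := by
  intro u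
  constructor
  · intro hu
    have key : u = 1 ∨ u = -1 := by
      rw [Subgroup.commutator_def] at hu
      induction hu using Subgroup.closure_induction with
      | mem x hx =>
        obtain ⟨a, ha, b, hb, rfl⟩ := hx
        rcases RC_H22 ha hb with h | h
        · left
          rw [commutatorElement_def, h]
          group
        · right
          rw [commutatorElement_def, h]
          simp [mul_assoc]
      | one => exact Or.inl rfl
      | mul x y _ _ hx hy =>
        rcases hx with rfl | rfl <;> rcases hy with rfl | rfl <;> simp
      | inv x _ hx => rcases hx with rfl | rfl <;> simp
    rcases key with rfl | rfl <;> simp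
  · rintro (h | h)
    · have : u = 1 := Units.ext h
      rw [this]
      exact one_mem _
    · have hu : u = uS1 * uT1 * uS1⁻¹ * uT1⁻¹ := by
        have h1 : uS1 * uT1 = -(uT1 * uS1) := Units.ext (by simpa [uS1, uT1] using S1T1)
        have h2 : u = -1 := Units.ext (by simpa using h)
        rw [h1, h2]
        simp [mul_assoc]
      rw [hu, ← commutatorElement_def]
      apply Subgroup.commutator_mem_commutator
      · exact Subgroup.subset_closure (Or.inl rfl)
      · exact Subgroup.subset_closure (Or.inr (Or.inr (Or.inl rfl)))
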